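/- Let S be a BQ-algebra of rank n over ℤ/2 with degree-one generators x_1,…,x_n, let S' be a graded ℤ/2-algebra with S'_{n−1} ≠ 0, and let f : S → S' be a surjective homomorphism of graded ℤ/2-algebras. If the kernel of the induced ℤ/2-linear map f : S_1 → S'_1 has dimension exactly one, then S' is a BQ-algebra of rank n−1; that is, there exist elements y_1,…,y_{n−1} ∈ S'_1 generating S' as a ℤ/2-algebra such that y_k² = Σ_{i<k} c_{ik} y_i y_k for some c_{ik} ∈ ℤ/2 and y_1 y_2 ⋯ y_{n−1} ≠ 0. -/

import Mathlib

lemma bq_rel_iff {R : Type*} [CommRing R] [Algebra (ZMod 2) R] {n : ℕ} (y : Fin n → R) (k : Fin n) :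
    (∃ a : Fin n → ZMod 2,
      y k ^ 2 = ∑ i ∈ Finset.univ.filter (fun i => i < k), a i • (y i * y k)) ↔
    ∃ v ∈ Submodule.span (ZMod 2) (y '' {i | i < k}), y k ^ 2 = v * y k := by
  have key : (y '' {i | i < k}) = y '' ((Finset.univ.filter (fun i => i < k) : Finset (Fin n)) : Set (Fin n)) := by
    simp
  rw [key]
  constructor
  · rintro ⟨a, ha⟩
    refine ⟨∑ i ∈ Finset.univ.filter (fun i => i < k), a i • y i, ?_, ?_⟩
    · refine Submodule.sum_mem _ fun i hi => Submodule.smul_mem _ _ (Submodule.subset_span ⟨i, ?_, rfl⟩)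
      exact hi
    · rw [ha, Finset.sum_mul]
      simp only [smul_mul_assoc]
  · rintro ⟨v, hv, h⟩
    rw [Submodule.mem_span_image_finset_iff_exists_fun] at hv
    obtain ⟨c, rfl⟩ := hv
    refine ⟨fun i => if hi : i ∈ Finset.univ.filter (fun i => i < k) then c ⟨i, hi⟩ else 0, ?_⟩
    rw [h, Finset.sum_mul, ← Finset.sum_coe_sort (Finset.univ.filter (fun i => i < k))]
    refine Finset.sum_congr rfl fun i _ => ?_
    beta_reduce
    rw [dif_pos i.2, smul_mul_assoc]

lemma bq_mul_mem {R : Type*} [CommRing R] [Algebra (ZMod 2) R] {n : ℕ} (y : Fin n → R)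
    (hP1 : ∀ k : Fin n, ∃ a : Fin n → ZMod 2,
      y k ^ 2 = ∑ i ∈ Finset.univ.filter (fun i => i < k), a i • (y i * y k)) (k : Fin n) :
    ∀ T : Finset (Fin n), y k * ∏ i ∈ T, y i ∈
      Submodule.span (ZMod 2) (Set.range fun T : Finset (Fin n) => ∏ i ∈ T, y i) := by
  induction k using WellFoundedLT.induction with
  | ind k ih =>
    intro T
    by_cases hk : k ∈ T
    · obtain ⟨a, ha⟩ := hP1 k
      have : y k * ∏ i ∈ T, y i =
          ∑ i ∈ Finset.univ.filter (fun i => i < k), a i • (y i * ∏ i ∈ T, y i) := by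
        rw [← Finset.mul_prod_erase T y hk, ← mul_assoc, ← sq, ha, Finset.sum_mul]
        refine Finset.sum_congr rfl fun i _ => ?_
        rw [smul_mul_assoc, mul_assoc]
      rw [this]
      refine Submodule.sum_mem _ fun i hi => Submodule.smul_mem _ _ (ih i ?_ T)
      simpa using hi
    · rw [← Finset.prod_insert hk]
      exact Submodule.subset_span ⟨_, rfl⟩

lemma bq_span {R : Type*} [CommRing R] [Algebra (ZMod 2) R] {n : ℕ} (y : Fin n → R)
    (hgen : Algebra.adjoin (ZMod 2) (Set.range y) = ⊤)
    (hP1 : ∀ k : Fin n, ∃ a : Fin n → ZMod 2,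
      y k ^ 2 = ∑ i ∈ Finset.univ.filter (fun i => i < k), a i • (y i * y k)) (b : R) :
    b ∈ Submodule.span (ZMod 2) (Set.range fun T : Finset (Fin n) => ∏ i ∈ T, y i) := by
  set N := Submodule.span (ZMod 2) (Set.range fun T : Finset (Fin n) => ∏ i ∈ T, y i) with hN
  have hone : (1 : R) ∈ N := Submodule.subset_span ⟨∅, by simp⟩
  have hmul : ∀ b ∈ Algebra.adjoin (ZMod 2) (Set.range y), ∀ z ∈ N, b * z ∈ N := by
    intro b hb
    induction hb using Algebra.adjoin_induction with
    | mem w hw =>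
      obtain ⟨k, rfl⟩ := hw
      intro z hz
      induction hz using Submodule.span_induction with
      | mem z hz =>
        obtain ⟨T, rfl⟩ := hz
        exact bq_mul_mem y hP1 k T
      | zero => simp
      | add u v _ _ hu hv => rw [mul_add]; exact N.add_mem hu hv
      | smul c u _ hu => rw [mul_smul_comm]; exact N.smul_mem _ hu
    | algebraMap r =>
      intro z hz
      rw [← Algebra.smul_def]
      exact N.smul_mem _ hz
    | add u v _ _ hu hv => intro z hz; rw [add_mul]; exact N.add_mem (hu z hz) (hv z hz)
    | mul u v _ _ hu hv => intro z hz; rw [mul_assoc]; exact hu _ (hv z hz)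
  simpa using hmul b (by rw [hgen]; trivial) 1 hone

lemma bq_span_deg {R : Type*} [CommRing R] [Algebra (ZMod 2) R]
    (ℬ : ℕ → Submodule (ZMod 2) R) [GradedRing ℬ] {n : ℕ} (y : Fin n → R)
    (hy : ∀ i, y i ∈ ℬ 1)
    (hgen : Algebra.adjoin (ZMod 2) (Set.range y) = ⊤)
    (hP1 : ∀ k : Fin n, ∃ a : Fin n → ZMod 2,
      y k ^ 2 = ∑ i ∈ Finset.univ.filter (fun i => i < k), a i • (y i * y k)) (q : ℕ) :
    ℬ q ≤ Submodule.span (ZMod 2)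
      ((fun T : Finset (Fin n) => ∏ i ∈ T, y i) '' {T | T.card = q}) := by
  intro b hb
  have hdeg : ∀ T : Finset (Fin n), ∏ i ∈ T, y i ∈ ℬ T.card := by
    intro T
    have := SetLike.prod_mem_graded ℬ (fun _ => 1) y (F := T) (fun i _ => hy i)
    simpa using this
  have hproj : ∀ b : R, (DirectSum.decompose ℬ b q : R) ∈ Submodule.span (ZMod 2)
      ((fun T : Finset (Fin n) => ∏ i ∈ T, y i) '' {T | T.card = q}) := by
    intro b
    have hb := bq_span y hgen hP1 b
    induction hb using Submodule.span_induction with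
    | mem z hz =>
      obtain ⟨T, rfl⟩ := hz
      by_cases hT : T.card = q
      · subst hT
        rw [DirectSum.decompose_of_mem_same ℬ (hdeg T)]
        exact Submodule.subset_span ⟨T, rfl, rfl⟩
      · rw [DirectSum.decompose_of_mem_ne ℬ (hdeg T) hT]
        exact Submodule.zero_mem _
    | zero => simp
    | add u v _ _ hu hv => simpa using Submodule.add_mem _ hu hv
    | smul c u _ hu =>
      rw [DirectSum.decompose_smul]
      exact Submodule.smul_mem _ c hu
  have := hproj b
  rwa [DirectSum.decompose_of_mem_same ℬ hb] at this

/-- Let `S` be a BQ-algebra of rank `n` over `ℤ/2` with degree-one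
generators `x_1, …, x_n`, let `S'` be a graded `ℤ/2`-algebra with `S'_{n-1} ≠ 0`, and let
`f : S → S'` be a surjective homomorphism of graded `ℤ/2`-algebras. If the kernel of the
induced linear map `S_1 → S'_1` has dimension exactly one, then `S'` is a BQ-algebra of
rank `n - 1`: there are degree-one elements `y_1, …, y_{n-1}` generating `S'` with
`y_k² = Σ_{i<k} c_{ik} y_i y_k` and `y_1 ⋯ y_{n-1} ≠ 0`. -/
theorem bq_algebra_quotient_is_bq_of_kernel_dim_one
    {S : Type*} [CommRing S] [Algebra (ZMod 2) S]
    (𝒜 : ℕ → Submodule (ZMod 2) S) [GradedRing 𝒜]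
    {S' : Type*} [CommRing S'] [Algebra (ZMod 2) S']
    (ℬ : ℕ → Submodule (ZMod 2) S') [GradedRing ℬ]
    {n : ℕ} (x : Fin n → S)
    (hx1 : ∀ i, x i ∈ 𝒜 1)
    (hgen : Algebra.adjoin (ZMod 2) (Set.range x) = ⊤)
    (hP1 : ∀ k : Fin n, ∃ a : Fin n → ZMod 2,
      x k ^ 2 = ∑ i ∈ Finset.univ.filter (fun i => i < k), a i • (x i * x k))
    (hP2 : ∏ i, x i ≠ 0)
    (f : S →ₐ[ZMod 2] S') (hf : Function.Surjective f)
    (hgr : ∀ q : ℕ, ∀ s ∈ 𝒜 q, f s ∈ ℬ q)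
    (hB : ℬ (n - 1) ≠ ⊥)
    (hker : Module.finrank (ZMod 2)
      (LinearMap.ker (f.toLinearMap.restrict (p := 𝒜 1) (q := ℬ 1) (hgr 1))) = 1) :
    ∃ y : Fin (n - 1) → S',
      (∀ i, y i ∈ ℬ 1) ∧
      Algebra.adjoin (ZMod 2) (Set.range y) = ⊤ ∧
      (∀ k : Fin (n - 1), ∃ c : Fin (n - 1) → ZMod 2,
        y k ^ 2 = ∑ i ∈ Finset.univ.filter (fun i => i < k), c i • (y i * y k)) ∧
      ∏ i, y i ≠ 0 := by
  have hsp := bq_span_deg 𝒜 x hx1 hgen hP1 1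
  have hker' : ∃ s ∈ 𝒜 1, s ≠ 0 ∧ f s = 0 := by
    obtain ⟨v, hv, -⟩ := finrank_eq_one_iff'.1 hker
    refine ⟨v.1.1, v.1.2, fun h => hv (Subtype.ext (Subtype.ext h)), ?_⟩
    exact congrArg Subtype.val (LinearMap.mem_ker.1 v.2)
  obtain ⟨s, hs, hs0, hfs⟩ := hker'
  have hs' : s ∈ Submodule.span (ZMod 2) (Set.range x) := by
    refine Submodule.span_mono ?_ (hsp hs)
    rintro _ ⟨T, hT, rfl⟩
    obtain ⟨i, rfl⟩ := Finset.card_eq_one.1 hT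
    exact ⟨i, by simp⟩
  obtain ⟨c, rfl⟩ := (Submodule.mem_span_range_iff_exists_fun _).1 hs'
  have hne : (Finset.univ.filter (fun i => c i ≠ 0)).Nonempty := by
    by_contra h
    rw [Finset.not_nonempty_iff_eq_empty, Finset.filter_eq_empty_iff] at h
    apply hs0
    refine Finset.sum_eq_zero fun i hi => ?_
    have := h hi
    rw [not_not.1 this, zero_smul]
  obtain ⟨p, hp, hmax⟩ := Finset.exists_max_image _ id hne
  simp only [Finset.mem_filter, Finset.mem_univ, true_and, id] at hp hmax
  have hp1 : c p = 1 := by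
    generalize c p = t at hp
    revert t; decide
  obtain _ | m := n
  · exact p.elim0
  have hfp : f (x p) ∈ Submodule.span (ZMod 2) ((fun i => f (x i)) '' {i | i < p}) := by
    have h : f (x p) = - ∑ i ∈ Finset.univ.erase p, c i • f (x i) := by
      rw [map_sum, ← Finset.add_sum_erase _ _ (Finset.mem_univ p), hp1, one_smul] at hfs
      simp only [map_smul] at hfs
      exact eq_neg_of_add_eq_zero_left hfs
    rw [h]
    refine Submodule.neg_mem _ (Submodule.sum_mem _ fun i hi => ?_)
    by_cases hc : c i = 0
    · rw [hc, zero_smul]; exact Submodule.zero_mem _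
    · exact Submodule.smul_mem _ _ (Submodule.subset_span
        ⟨i, lt_of_le_of_ne (hmax i hc) (Finset.ne_of_mem_erase hi), rfl⟩)
  change ∃ y : Fin m → S', _
  change ℬ m ≠ ⊥ at hB
  set y : Fin m → S' := fun j => f (x (p.succAbove j)) with hy
  have hy1 : ∀ i, y i ∈ ℬ 1 := fun i => hgr 1 _ (hx1 _)
  have hclaim : ∀ (k : Fin m) (i : Fin (m+1)), i < p.succAbove k →
      f (x i) ∈ Submodule.span (ZMod 2) (y '' {j | j < k}) := by
    intro k i hi
    rcases Fin.eq_self_or_eq_succAbove p i with rfl | ⟨j, rfl⟩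
    · refine Submodule.span_mono ?_ hfp
      rintro _ ⟨i', hi', rfl⟩
      rcases Fin.eq_self_or_eq_succAbove i i' with rfl | ⟨j, rfl⟩
      · exact (lt_irrefl i' hi').elim
      · exact ⟨j, (Fin.succAbove_lt_succAbove_iff).1 (lt_trans hi' hi), rfl⟩
    · exact Submodule.subset_span ⟨j, Fin.succAbove_lt_succAbove_iff.1 hi, rfl⟩
  have hyP1 : ∀ k : Fin m, ∃ c : Fin m → ZMod 2,
        y k ^ 2 = ∑ i ∈ Finset.univ.filter (fun i => i < k), c i • (y i * y k) := by
    intro k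
    rw [bq_rel_iff]
    obtain ⟨v, hv, h⟩ := (bq_rel_iff x _).1 (hP1 (p.succAbove k))
    refine ⟨f v, ?_, ?_⟩
    · have : Submodule.span (ZMod 2) (x '' {i | i < p.succAbove k}) ≤
          (Submodule.span (ZMod 2) (y '' {j | j < k})).comap f.toLinearMap := by
        rw [Submodule.span_le]
        rintro _ ⟨i, hi, rfl⟩
        exact hclaim k i hi
      exact this hv
    · simp only [hy]
      rw [← map_pow, h, map_mul]
  have hygen : Algebra.adjoin (ZMod 2) (Set.range y) = ⊤ := by
    have h1 : Submodule.span (ZMod 2) (Set.range y) ≤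
        Subalgebra.toSubmodule (Algebra.adjoin (ZMod 2) (Set.range y)) :=
      Algebra.span_le_adjoin _ _
    have h2 : (Algebra.adjoin (ZMod 2) (Set.range x)).map f ≤
        Algebra.adjoin (ZMod 2) (Set.range y) := by
      rw [AlgHom.map_adjoin, Algebra.adjoin_le_iff]
      rintro _ ⟨_, ⟨i, rfl⟩, rfl⟩
      apply h1
      rcases Fin.eq_self_or_eq_succAbove p i with rfl | ⟨j, rfl⟩
      · refine Submodule.span_mono ?_ hfp
        rintro _ ⟨i', hi', rfl⟩
        rcases Fin.eq_self_or_eq_succAbove i i' with rfl | ⟨j, rfl⟩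
        · exact (lt_irrefl i' hi').elim
        · exact ⟨j, rfl⟩
      · exact Submodule.subset_span ⟨j, rfl⟩
    rw [hgen, Algebra.map_top, (AlgHom.range_eq_top f).2 hf] at h2
    exact top_le_iff.1 h2
  refine ⟨y, hy1, hygen, hyP1, fun h0 => hB ?_⟩
  rw [eq_bot_iff]
  refine (bq_span_deg ℬ y hy1 hygen hyP1 m).trans ?_
  rw [Submodule.span_le]
  rintro _ ⟨T, hT, rfl⟩
  have : T = Finset.univ := by
    rw [← Finset.card_eq_iff_eq_univ, Fintype.card_fin]; exact hT
  subst this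
  simpa using h0
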